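/- Let L ⊆ ℕ^n and L' ⊆ ℕ^{n'} be finite sets of squarefree exponent vectors, each closed under join ⊔ (componentwise maximum), and let λ : L → L' be a bijection such that for all a, b ∈ L: (i) a ≤ b if and only if λ(a) ≤ λ(b) (λ is an isomorphism of the divisibility orders, hence of the lattices), and (ii) a ⊓ b = 0 if and only if λ(a) ⊓ λ(b) = 0 (λ preserves the GCD graph). Then λ is additive on coprime pairs: for all a, b ∈ L with a ⊓ b = 0, one has a + b ∈ L and λ(a + b) = λ(a) + λ(b). -/

import Mathlib

theorem coprime_add_aux {m : ℕ} (a b : Fin m → ℕ) (h : a ⊓ b = 0) : a + b = a ⊔ b := by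
  funext i
  have := congrFun h i
  simp only [Pi.inf_apply, Pi.zero_apply, Pi.add_apply, Pi.sup_apply] at *
  omega

/-- Let `L ⊆ ℕ^n` and `L' ⊆ ℕ^{n'}` be finite sets of squarefree
exponent vectors, each closed under join `⊔` (componentwise maximum), and let
`λ : L → L'` be a bijection such that for all `a, b ∈ L`:
(i) `a ≤ b ↔ λ a ≤ λ b` (an isomorphism of the divisibility orders/lattices), and
(ii) `a ⊓ b = 0 ↔ λ a ⊓ λ b = 0` (`λ` preserves the GCD graph).
Then `λ` is additive on coprime pairs: for all `a, b ∈ L` with `a ⊓ b = 0`, one has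
`a + b ∈ L` and `λ (a + b) = λ a + λ b`. -/
theorem stmt_10 (n n' : ℕ) (L : Finset (Fin n → ℕ)) (L' : Finset (Fin n' → ℕ))
    (hsf : ∀ a ∈ L, ∀ i, a i ≤ 1) (hsf' : ∀ a ∈ L', ∀ i, a i ≤ 1)
    (hjoin : ∀ a ∈ L, ∀ b ∈ L, a ⊔ b ∈ L)
    (hjoin' : ∀ a ∈ L', ∀ b ∈ L', a ⊔ b ∈ L')
    (lam : {x // x ∈ L} → {y // y ∈ L'}) (hbij : Function.Bijective lam)
    (hord : ∀ a b : {x // x ∈ L},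
      (a : Fin n → ℕ) ≤ (b : Fin n → ℕ) ↔ (lam a : Fin n' → ℕ) ≤ (lam b : Fin n' → ℕ))
    (hgcd : ∀ a b : {x // x ∈ L},
      (a : Fin n → ℕ) ⊓ (b : Fin n → ℕ) = 0 ↔
      (lam a : Fin n' → ℕ) ⊓ (lam b : Fin n' → ℕ) = 0) :
    ∀ a b : {x // x ∈ L}, (a : Fin n → ℕ) ⊓ (b : Fin n → ℕ) = 0 →
      ∃ h : (a : Fin n → ℕ) + (b : Fin n → ℕ) ∈ L,
        (lam ⟨(a : Fin n → ℕ) + (b : Fin n → ℕ), h⟩ : Fin n' → ℕ) =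
          (lam a : Fin n' → ℕ) + (lam b : Fin n' → ℕ) := by
  intro a b hab
  have e := coprime_add_aux _ _ hab
  have h : (a : Fin n → ℕ) + (b : Fin n → ℕ) ∈ L := e ▸ hjoin _ a.2 _ b.2
  refine ⟨h, ?_⟩
  rw [coprime_add_aux _ _ ((hgcd a b).1 hab)]
  obtain ⟨c, hc⟩ := hbij.2 ⟨_, hjoin' _ (lam a).2 _ (lam b).2⟩
  have hc' : (lam c : Fin n' → ℕ) = (lam a : Fin n' → ℕ) ⊔ (lam b : Fin n' → ℕ) := by rw [hc]
  apply le_antisymm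
  · rw [← hc', ← hord]
    change (a : Fin n → ℕ) + (b : Fin n → ℕ) ≤ c
    rw [e]
    exact sup_le ((hord a c).2 (hc' ▸ le_sup_left)) ((hord b c).2 (hc' ▸ le_sup_right))
  · apply sup_le
    · rw [← hord]
      change (a : Fin n → ℕ) ≤ a + b
      rw [e]
      exact le_sup_left
    · rw [← hord]
      change (b : Fin n → ℕ) ≤ a + b
      rw [e]
      exact le_sup_right
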